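/- For every real η with 0 < η ≤ 1/2, one has (2·√(2π)/η) · ∫₀^{1.1·η^{1/2}} y · φ_η(y) · Φ̃_{1−η}(y) dy ≤ 1/2. -/

import Mathlib

open MeasureTheory

/-- `φ_v(x) = (2πv)^{-1/2} exp(-x²/(2v))`, the centered Gaussian density of variance `v`. -/
noncomputable def gaussDensity (v x : ℝ) : ℝ :=
  (Real.sqrt (2 * Real.pi * v))⁻¹ * Real.exp (-x ^ 2 / (2 * v))

/-- `Φ̃_v(x) = ∫₀^x φ_v(w) dw`. -/
noncomputable def gaussPartialCDF (v x : ℝ) : ℝ :=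
  ∫ w in (0 : ℝ)..x, gaussDensity v w

/-!
Up to the constant `2√(2π)/η`, the meander density at time `η` is the Rayleigh weight `y φ_η(y)`
times the increasing factor `Φ̃_{1-η}(y)`, so the meander puts less of its mass on `[0, a]` than
the Rayleigh law does. Its total mass is explicit because `φ_u φ_v` is again a Gaussian density up
to a constant, and the Rayleigh mass of `[0, c√η]` is `1 - exp(-c²/2)`; this is less than `1/2`
as soon as `c² < 2 log 2`.
-/

open Filter Set Topology

-- Cross-multiplied: the `w`-average of `f` over `s` is at most its `w`-average over `t`.
theorem setIntegral_mul_mul_setIntegral_le {α : Type*} [MeasurableSpace α] {μ : Measure α}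
    {w f : α → ℝ} {s t : Set α} {m : ℝ} (hs : MeasurableSet s) (ht : MeasurableSet t)
    (hst : s ⊆ t) (hw : IntegrableOn w t μ) (hwf : IntegrableOn (fun x => w x * f x) t μ)
    (hw0 : ∀ x ∈ t, 0 ≤ w x) (hfs : ∀ x ∈ s, f x ≤ m) (hft : ∀ x ∈ t \ s, m ≤ f x) :
    (∫ x in s, w x * f x ∂μ) * ∫ x in t, w x ∂μ ≤
      (∫ x in t, w x * f x ∂μ) * ∫ x in s, w x ∂μ := by
  have split {g : α → ℝ} (hg : IntegrableOn g t μ) :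
      ∫ x in t, g x ∂μ = (∫ x in s, g x ∂μ) + ∫ x in t \ s, g x ∂μ := by
    rw [setIntegral_sdiff hs hg hst, add_sub_cancel]
  have inner_le : ∫ x in s, w x * f x ∂μ ≤ (∫ x in s, w x ∂μ) * m := by
    rw [← integral_mul_const]
    exact setIntegral_mono_on (hwf.mono_set hst) ((hw.mono_set hst).mul_const m) hs
      fun x hx => mul_le_mul_of_nonneg_left (hfs x hx) (hw0 x (hst hx))
  have le_outer : (∫ x in t \ s, w x ∂μ) * m ≤ ∫ x in t \ s, w x * f x ∂μ := by
    rw [← integral_mul_const]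
    exact setIntegral_mono_on ((hw.mono_set sdiff_subset).mul_const m) (hwf.mono_set sdiff_subset)
      (ht.diff hs) fun x hx => mul_le_mul_of_nonneg_left (hft x hx) (hw0 x hx.1)
  have inner_nonneg : 0 ≤ ∫ x in s, w x ∂μ := setIntegral_nonneg hs fun x hx => hw0 x (hst hx)
  have outer_nonneg : 0 ≤ ∫ x in t \ s, w x ∂μ :=
    setIntegral_nonneg (ht.diff hs) fun x hx => hw0 x hx.1
  rw [split hw, split hwf]
  linarith [mul_le_mul_of_nonneg_right inner_le outer_nonneg,
    mul_le_mul_of_nonneg_left le_outer inner_nonneg]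

theorem one_sub_exp_neg_le_half {x : ℝ} (hx : x ≤ Real.log 2) : 1 - Real.exp (-x) ≤ 1 / 2 := by
  have half_le : Real.exp (-Real.log 2) ≤ Real.exp (-x) := Real.exp_le_exp.mpr (neg_le_neg hx)
  rw [Real.exp_neg, Real.exp_log two_pos] at half_le
  linarith

section GaussDensity

variable {u v : ℝ}

theorem gaussDensity_nonneg (v x : ℝ) : 0 ≤ gaussDensity v x := by
  unfold gaussDensity
  positivity

theorem gaussDensity_pos (hv : 0 < v) (x : ℝ) : 0 < gaussDensity v x := by
  unfold gaussDensity
  positivity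

theorem gaussDensity_zero (v : ℝ) : gaussDensity v 0 = (√(2 * Real.pi * v))⁻¹ := by
  simp [gaussDensity]

theorem gaussDensity_eq_mul_exp (v x : ℝ) :
    gaussDensity v x = gaussDensity v 0 * Real.exp (-x ^ 2 / (2 * v)) := by
  rw [gaussDensity_zero, gaussDensity]

theorem continuous_gaussDensity (v : ℝ) : Continuous (gaussDensity v) := by
  unfold gaussDensity
  fun_prop

theorem gaussDensity_mul_gaussDensity (hu : 0 < u) (hv : 0 < v) (x : ℝ) :
    gaussDensity u x * gaussDensity v x =
      gaussDensity (u + v) 0 * gaussDensity (u * v / (u + v)) x := by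
  have sqrt_mul_sqrt : √(2 * Real.pi * u) * √(2 * Real.pi * v) =
      √(2 * Real.pi * (u + v)) * √(2 * Real.pi * (u * v / (u + v))) := by
    rw [← Real.sqrt_mul (by positivity), ← Real.sqrt_mul (by positivity)]
    congr 1
    field_simp
  have exponent_add : -x ^ 2 / (2 * u) + -x ^ 2 / (2 * v) =
      -x ^ 2 / (2 * (u * v / (u + v))) := by
    field_simp
    ring
  rw [gaussDensity_zero, gaussDensity, gaussDensity, gaussDensity, mul_mul_mul_comm, ← mul_inv,
    sqrt_mul_sqrt, ← Real.exp_add, exponent_add, mul_inv, mul_assoc]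

theorem hasDerivAt_gaussDensity (v x : ℝ) :
    HasDerivAt (gaussDensity v) (-(x / v) * gaussDensity v x) x := by
  have exponent : HasDerivAt (fun y : ℝ => -y ^ 2 / (2 * v)) (-(2 * x) / (2 * v)) x := by
    simpa using ((hasDerivAt_pow 2 x).neg).div_const (2 * v)
  refine (exponent.exp.const_mul (√(2 * Real.pi * v))⁻¹).congr_deriv ?_
  rw [gaussDensity]
  ring

theorem tendsto_gaussDensity_atTop (hv : 0 < v) : Tendsto (gaussDensity v) atTop (𝓝 0) := by
  have exponent : Tendsto (fun x : ℝ => -x ^ 2 / (2 * v)) atTop atBot :=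
    (tendsto_neg_atTop_atBot.comp (tendsto_pow_atTop two_ne_zero)).atBot_div_const (by positivity)
  exact mul_zero (√(2 * Real.pi * v))⁻¹ ▸ (Real.tendsto_exp_atBot.comp exponent).const_mul _

theorem integrable_gaussDensity (hv : 0 < v) : Integrable (gaussDensity v) := by
  refine ((integrable_exp_neg_mul_sq (b := (2 * v)⁻¹) (by positivity)).const_mul
    (√(2 * Real.pi * v))⁻¹).congr (ae_of_all _ fun x => ?_)
  simp only [gaussDensity]
  ring_nf

theorem integral_Ioi_gaussDensity (hv : 0 < v) : ∫ x in Ioi 0, gaussDensity v x = 1 / 2 := by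
  have exponent (x : ℝ) : -x ^ 2 / (2 * v) = -(2 * v)⁻¹ * x ^ 2 := by ring
  have hsqrt : √(2 * Real.pi * v) ≠ 0 := by positivity
  simp only [gaussDensity, exponent]
  rw [integral_const_mul, integral_gaussian_Ioi, div_inv_eq_mul,
    show Real.pi * (2 * v) = 2 * Real.pi * v by ring]
  field_simp

end GaussDensity

section GaussPartialCDF

variable {v : ℝ}

theorem gaussPartialCDF_zero (v : ℝ) : gaussPartialCDF v 0 = 0 :=
  intervalIntegral.integral_same

theorem hasDerivAt_gaussPartialCDF (v x : ℝ) :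
    HasDerivAt (gaussPartialCDF v) (gaussDensity v x) x :=
  ((continuous_gaussDensity v).integral_hasStrictDerivAt 0 x).hasDerivAt

theorem monotone_gaussPartialCDF (v : ℝ) : Monotone (gaussPartialCDF v) :=
  monotone_of_hasDerivAt_nonneg (hasDerivAt_gaussPartialCDF v) (gaussDensity_nonneg v)

theorem gaussPartialCDF_nonneg (v : ℝ) {x : ℝ} (hx : 0 ≤ x) : 0 ≤ gaussPartialCDF v x :=
  (gaussPartialCDF_zero v).symm.le.trans (monotone_gaussPartialCDF v hx)

theorem tendsto_gaussPartialCDF_atTop (hv : 0 < v) :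
    Tendsto (gaussPartialCDF v) atTop (𝓝 (1 / 2)) :=
  integral_Ioi_gaussDensity hv ▸
    intervalIntegral_tendsto_integral_Ioi 0 (integrable_gaussDensity hv).integrableOn tendsto_id

end GaussPartialCDF

section RayleighWeight

variable {u : ℝ}

/-- The density at `y > 0` of the Rayleigh law of scale `√u`, up to the factor `√(2π/u)`. -/
noncomputable def rayleighWeight (u y : ℝ) : ℝ :=
  y * gaussDensity u y

theorem hasDerivAt_neg_mul_gaussDensity (hu : u ≠ 0) (y : ℝ) :
    HasDerivAt (fun x => -(u * gaussDensity u x)) (rayleighWeight u y) y := by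
  refine ((hasDerivAt_gaussDensity u y).const_mul u).fun_neg.congr_deriv ?_
  rw [rayleighWeight]
  field_simp

theorem tendsto_neg_mul_gaussDensity_atTop (hu : 0 < u) :
    Tendsto (fun x => -(u * gaussDensity u x)) atTop (𝓝 0) := by
  simpa only [mul_zero, neg_zero] using ((tendsto_gaussDensity_atTop hu).const_mul u).neg

theorem continuous_rayleighWeight (u : ℝ) : Continuous (rayleighWeight u) :=
  continuous_id.mul (continuous_gaussDensity u)

theorem rayleighWeight_nonneg (u : ℝ) {y : ℝ} (hy : 0 ≤ y) : 0 ≤ rayleighWeight u y :=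
  mul_nonneg hy (gaussDensity_nonneg u y)

theorem integrableOn_Ioi_rayleighWeight (hu : 0 < u) : IntegrableOn (rayleighWeight u) (Ioi 0) :=
  integrableOn_Ioi_deriv_of_nonneg' (fun y _ => hasDerivAt_neg_mul_gaussDensity hu.ne' y)
    (fun _ hy => rayleighWeight_nonneg u (le_of_lt hy)) (tendsto_neg_mul_gaussDensity_atTop hu)

theorem integral_Ioi_rayleighWeight (hu : 0 < u) :
    ∫ y in Ioi 0, rayleighWeight u y = u * gaussDensity u 0 := by
  rw [integral_Ioi_of_hasDerivAt_of_nonneg' (fun y _ => hasDerivAt_neg_mul_gaussDensity hu.ne' y)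
    (fun _ hy => rayleighWeight_nonneg u (le_of_lt hy)) (tendsto_neg_mul_gaussDensity_atTop hu),
    zero_sub, neg_neg]

theorem integral_rayleighWeight (hu : u ≠ 0) (a : ℝ) :
    ∫ y in (0 : ℝ)..a, rayleighWeight u y =
      u * gaussDensity u 0 * (1 - Real.exp (-a ^ 2 / (2 * u))) := by
  rw [intervalIntegral.integral_eq_sub_of_hasDerivAt
    (fun y _ => hasDerivAt_neg_mul_gaussDensity hu y)
    ((continuous_rayleighWeight u).intervalIntegrable 0 a),
    gaussDensity_eq_mul_exp u a]
  ring

end RayleighWeight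

section MeanderWeight

variable {u v : ℝ}

/-- For `y > 0`, `u + v = 1` and up to the factor `2√(2π)/u`, the density at `y` of the standard
Brownian meander at time `u`. -/
noncomputable def meanderWeight (u v y : ℝ) : ℝ :=
  rayleighWeight u y * gaussPartialCDF v y

/-- An antiderivative of the meander weight. It comes from integration by parts, which
leaves `u ∫ φ_u φ_v`, and from the product formula `gaussDensity_mul_gaussDensity`. -/
noncomputable def meanderPrimitive (u v x : ℝ) : ℝ :=
  u * (gaussDensity (u + v) 0 * gaussPartialCDF (u * v / (u + v)) x -
    gaussDensity u x * gaussPartialCDF v x)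

theorem meanderPrimitive_zero (u v : ℝ) : meanderPrimitive u v 0 = 0 := by
  simp [meanderPrimitive, gaussPartialCDF_zero]

theorem hasDerivAt_meanderPrimitive (hu : 0 < u) (hv : 0 < v) (y : ℝ) :
    HasDerivAt (meanderPrimitive u v) (meanderWeight u v y) y := by
  refine ((((hasDerivAt_gaussPartialCDF _ y).const_mul _).sub
    ((hasDerivAt_gaussDensity u y).mul (hasDerivAt_gaussPartialCDF v y))).const_mul u).congr_deriv
    ?_
  rw [gaussDensity_mul_gaussDensity hu hv, meanderWeight, rayleighWeight]
  field_simp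
  ring

theorem tendsto_meanderPrimitive_atTop (hu : 0 < u) (hv : 0 < v) :
    Tendsto (meanderPrimitive u v) atTop (𝓝 (u * gaussDensity (u + v) 0 / 2)) := by
  have product_term := (tendsto_gaussPartialCDF_atTop (v := u * v / (u + v))
    (by positivity)).const_mul (gaussDensity (u + v) 0)
  have boundary_term := (tendsto_gaussDensity_atTop hu).mul (tendsto_gaussPartialCDF_atTop hv)
  have limit_eq : u * gaussDensity (u + v) 0 / 2 =
      u * (gaussDensity (u + v) 0 * (1 / 2) - 0 * (1 / 2)) := by ring
  rw [limit_eq]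
  exact (product_term.sub boundary_term).const_mul u

theorem meanderWeight_nonneg (u v : ℝ) {y : ℝ} (hy : 0 ≤ y) : 0 ≤ meanderWeight u v y :=
  mul_nonneg (rayleighWeight_nonneg u hy) (gaussPartialCDF_nonneg v hy)

theorem integrableOn_Ioi_meanderWeight (hu : 0 < u) (hv : 0 < v) :
    IntegrableOn (meanderWeight u v) (Ioi 0) :=
  integrableOn_Ioi_deriv_of_nonneg' (fun y _ => hasDerivAt_meanderPrimitive hu hv y)
    (fun _ hy => meanderWeight_nonneg u v (le_of_lt hy)) (tendsto_meanderPrimitive_atTop hu hv)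

theorem integral_Ioi_meanderWeight (hu : 0 < u) (hv : 0 < v) :
    ∫ y in Ioi 0, meanderWeight u v y = u * gaussDensity (u + v) 0 / 2 := by
  rw [integral_Ioi_of_hasDerivAt_of_nonneg' (fun y _ => hasDerivAt_meanderPrimitive hu hv y)
    (fun _ hy => meanderWeight_nonneg u v (le_of_lt hy)) (tendsto_meanderPrimitive_atTop hu hv),
    meanderPrimitive_zero, sub_zero]

theorem integral_meanderWeight_le {a : ℝ} (hu : 0 < u) (hv : 0 < v) (ha : 0 ≤ a) :
    ∫ y in (0 : ℝ)..a, meanderWeight u v y ≤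
      u * gaussDensity (u + v) 0 / 2 * (1 - Real.exp (-a ^ 2 / (2 * u))) := by
  have comparison :
      (∫ y in (0 : ℝ)..a, meanderWeight u v y) * ∫ y in Ioi 0, rayleighWeight u y ≤
        (∫ y in Ioi 0, meanderWeight u v y) * ∫ y in (0 : ℝ)..a, rayleighWeight u y := by
    rw [intervalIntegral.integral_of_le ha, intervalIntegral.integral_of_le ha]
    refine setIntegral_mul_mul_setIntegral_le (m := gaussPartialCDF v a) measurableSet_Ioc
      measurableSet_Ioi Ioc_subset_Ioi_self (integrableOn_Ioi_rayleighWeight hu)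
      (integrableOn_Ioi_meanderWeight hu hv) (fun y hy => rayleighWeight_nonneg u (le_of_lt hy))
      (fun y hy => monotone_gaussPartialCDF v hy.2) fun y hy => monotone_gaussPartialCDF v ?_
    exact le_of_not_ge fun hya => hy.2 ⟨hy.1, hya⟩
  rw [integral_Ioi_rayleighWeight hu, integral_Ioi_meanderWeight hu hv,
    integral_rayleighWeight hu.ne'] at comparison
  refine le_of_mul_le_mul_right (comparison.trans_eq ?_) (mul_pos hu (gaussDensity_pos hu 0))
  ring

end MeanderWeight

theorem stmt_6_general {η c : ℝ} (hη0 : 0 < η) (hη1 : η < 1) (hc : 0 ≤ c) :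
    (2 * √(2 * Real.pi) / η) *
        ∫ y in (0 : ℝ)..(c * √η), y * gaussDensity η y * gaussPartialCDF (1 - η) y
      ≤ 1 - Real.exp (-c ^ 2 / 2) := by
  have bound := integral_meanderWeight_le (v := 1 - η) hη0 (sub_pos.mpr hη1)
    (mul_nonneg hc (Real.sqrt_nonneg η))
  have exponent : -(c * √η) ^ 2 / (2 * η) = -c ^ 2 / 2 := by
    rw [mul_pow, Real.sq_sqrt hη0.le]
    field_simp
  rw [add_sub_cancel, gaussDensity_zero, mul_one, exponent] at bound
  refine (mul_le_mul_of_nonneg_left bound (by positivity)).trans_eq ?_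
  have hsqrt : √(2 * Real.pi) ≠ 0 := by positivity
  field_simp

/-- For every real `η` with `0 < η ≤ 1/2`,
`(2√(2π)/η) ∫₀^{1.1 √η} y φ_η(y) Φ̃_{1-η}(y) dy ≤ 1/2`; i.e. the standard Brownian meander at
time `η` lies below `1.1 η^{1/2}` with probability at most `1/2`. -/
theorem stmt_6 (η : ℝ) (hη0 : 0 < η) (hη : η ≤ 1 / 2) :
    (2 * Real.sqrt (2 * Real.pi) / η) *
        ∫ y in (0 : ℝ)..(1.1 * Real.sqrt η),
          y * gaussDensity η y * gaussPartialCDF (1 - η) y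
      ≤ 1 / 2 := by
  refine (stmt_6_general hη0 (by linarith) (by norm_num)).trans ?_
  exact neg_div (2 : ℝ) _ ▸ one_sub_exp_neg_le_half (by linarith [Real.log_two_gt_d9])
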